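/- Let w:ℝ→[0,∞) be locally Lipschitz with w′(q)≤0 for q≤0 and w′(q)=0 for q>0, and let φ be a smooth function with lim_{|x|→∞}|x|^{3/2}φ(t,x)=0. Then there is a universal constant C such that for each t: ∫_{ℝ³}|φ(t,x)|² w(q) dx ≤ C ∫_{ℝ³}( ⟨t+r⟩²|L(rφ)/r|² + ⟨t−r⟩²|L̲(rφ)/r|² ) w(q) dx. -/

import Mathlib

noncomputable section

open Real MeasureTheory Filter
open scoped RealInnerProductSpace Topology

/-- Spatial points: `ℝ³` with the Euclidean norm. -/
abbrev Pt : Type := EuclideanSpace ℝ (Fin 3)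

/-- `r = |x|`. -/
def rad (x : Pt) : ℝ := ‖x‖

/-- Japanese bracket `⟨a⟩ = (1+a²)^{1/2}`. -/
def jb (a : ℝ) : ℝ := Real.sqrt (1 + a ^ 2)

/-- `∂_t`. -/
def dT (f : ℝ → Pt → ℂ) : ℝ → Pt → ℂ := fun t x => deriv (fun s => f s x) t

/-- `∂_i`. -/
def dX (i : Fin 3) (f : ℝ → Pt → ℂ) : ℝ → Pt → ℂ :=
  fun t x => fderiv ℝ (fun y => f t y) x (EuclideanSpace.single i 1)

/-- `∂_r = Σ (x_i/r) ∂_i`. -/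
def dR (f : ℝ → Pt → ℂ) : ℝ → Pt → ℂ :=
  fun t x => ((rad x : ℝ) : ℂ)⁻¹ * ∑ i, ((x i : ℝ) : ℂ) * dX i f t x

/-- `L = ∂_t + ∂_r`. -/
def dL (f : ℝ → Pt → ℂ) : ℝ → Pt → ℂ := fun t x => dT f t x + dR f t x

/-- `L̲ = ∂_t − ∂_r`. -/
def dLbar (f : ℝ → Pt → ℂ) : ℝ → Pt → ℂ := fun t x => dT f t x - dR f t x

/-- angular derivative `∂̸_i = ∂_i − ω_i ∂_r`. -/
def dAng (i : Fin 3) (f : ℝ → Pt → ℂ) : ℝ → Pt → ℂ :=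
  fun t x => dX i f t x - ((x i / rad x : ℝ) : ℂ) * dR f t x

/-- `|∂̸ f|²`. -/
def angSq (f : ℝ → Pt → ℂ) (t : ℝ) (x : Pt) : ℝ := ∑ i, ‖dAng i f t x‖ ^ 2

/-- multiplication by `r`. -/
def rmul (f : ℝ → Pt → ℂ) : ℝ → Pt → ℂ := fun t x => ((rad x : ℝ) : ℂ) * f t x

/-- `□ = −∂_t² + Δ`. -/
def box (f : ℝ → Pt → ℂ) : ℝ → Pt → ℂ :=
  fun t x => - dT (dT f) t x + ∑ i, dX i (dX i f) t x

/-- rotation `Ω_{ij} = x_i ∂_j − x_j ∂_i`. -/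
def vrot (i j : Fin 3) (f : ℝ → Pt → ℂ) : ℝ → Pt → ℂ :=
  fun t x => ((x i : ℝ) : ℂ) * dX j f t x - ((x j : ℝ) : ℂ) * dX i f t x

/-- boost `Ω_{0i} = t ∂_i + x_i ∂_t`. -/
def vboost (i : Fin 3) (f : ℝ → Pt → ℂ) : ℝ → Pt → ℂ :=
  fun t x => (t : ℂ) * dX i f t x + ((x i : ℝ) : ℂ) * dT f t x

/-- scaling `S = t ∂_t + r ∂_r`. -/
def vscal (f : ℝ → Pt → ℂ) : ℝ → Pt → ℂ :=
  fun t x => (t : ℂ) * dT f t x + ((rad x : ℝ) : ℂ) * dR f t x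

/-- The commutator vector fields `Z`. -/
inductive VF : Type
  | time : VF
  | space : Fin 3 → VF
  | rot : Fin 3 → Fin 3 → VF
  | boost : Fin 3 → VF
  | scal : VF
  deriving DecidableEq, Fintype

/-- Action of a commutator vector field on a function. -/
def VF.app : VF → (ℝ → Pt → ℂ) → (ℝ → Pt → ℂ)
  | time => dT
  | space i => dX i
  | rot i j => vrot i j
  | boost i => vboost i
  | scal => vscal

/-- `Z^I` for a multiindex `I` (a list of vector fields). -/
def Ziter : List VF → (ℝ → Pt → ℂ) → ℝ → Pt → ℂ
  | [], f => f
  | z :: l, f => z.app (Ziter l f)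

/-- `C^∞` smoothness for a function of `(t,x)`. -/
def Smooth2 (f : ℝ → Pt → ℂ) : Prop := ContDiff ℝ (⊤ : ℕ∞) (Function.uncurry f)

/-- real-valued versions of the derivative operators -/
def dTR (f : ℝ → Pt → ℝ) : ℝ → Pt → ℝ := fun t x => deriv (fun s => f s x) t

def dXR (i : Fin 3) (f : ℝ → Pt → ℝ) : ℝ → Pt → ℝ :=
  fun t x => fderiv ℝ (fun y => f t y) x (EuclideanSpace.single i 1)

def boxR (f : ℝ → Pt → ℝ) : ℝ → Pt → ℝ :=
  fun t x => - dTR (dTR f) t x + ∑ i, dXR i (dXR i f) t x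

/-- `∂_q` acting on radiation fields `F(q,ω)`. -/
def dq (F : ℝ → Pt → ℂ) : ℝ → Pt → ℂ := fun q ω => deriv (fun s => F s ω) q

/-- `∂_{ω_i}` acting on radiation fields. -/
def dOm (i : Fin 3) (F : ℝ → Pt → ℂ) : ℝ → Pt → ℂ :=
  fun q ω => fderiv ℝ (fun y => F q y) ω (EuclideanSpace.single i 1)

/-- angular rotation `ω_i ∂_{ω_j} − ω_j ∂_{ω_i}` on radiation fields. -/
def aRot (i j : Fin 3) (F : ℝ → Pt → ℂ) : ℝ → Pt → ℂ :=
  fun q ω => ((ω i : ℝ) : ℂ) * dOm j F q ω - ((ω j : ℝ) : ℂ) * dOm i F q ω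

/-- `⟨q⟩∂_q` on radiation fields. -/
def qdq (F : ℝ → Pt → ℂ) : ℝ → Pt → ℂ := fun q ω => ((jb q : ℝ) : ℂ) * dq F q ω

/-- `q∂_q` on radiation fields. -/
def qmdq (F : ℝ → Pt → ℂ) : ℝ → Pt → ℂ := fun q ω => (q : ℂ) * dq F q ω

/-- iterated angular derivatives `∂_ω^α` (as iterated rotations). -/
def aIter : List (Fin 3 × Fin 3) → (ℝ → Pt → ℂ) → ℝ → Pt → ℂ
  | [], F => F
  | p :: l, F => aRot p.1 p.2 (aIter l F)

/-- `‖F‖_{N,∞,γ} ≤ ε`, stated term by term: every seminorm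
`sup |(⟨q⟩∂_q)^k ∂_ω^α F| ⟨q⟩^γ` with `k+|α| ≤ N` is at most `ε`. -/
def RadBound (N : ℕ) (γ ε : ℝ) (F : ℝ → Pt → ℂ) : Prop :=
  ∀ (k : ℕ) (l : List (Fin 3 × Fin 3)), k + l.length ≤ N →
    ∀ (q : ℝ) (ω : Pt), rad ω = 1 →
      ‖(qdq^[k]) (aIter l F) q ω‖ * jb q ^ γ ≤ ε

/-- spacetime indices `α ∈ {0,1,2,3}`: `none` is the time index. -/
abbrev Ix : Type := Option (Fin 3)

/-- `L^α(ω) = (1, ω)`. -/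
def Lup : Ix → Pt → ℝ
  | none => fun _ => 1
  | some i => fun ω => ω i

/-- `L_α(ω) = (−1, ω)`. -/
def Llow : Ix → Pt → ℝ
  | none => fun _ => -1
  | some i => fun ω => ω i

/-- `∂_α`. -/
def pd : Ix → (ℝ → Pt → ℂ) → ℝ → Pt → ℂ
  | none => dT
  | some i => dX i

/-- `∂_α` (real valued). -/
def pdR : Ix → (ℝ → Pt → ℝ) → ℝ → Pt → ℝ
  | none => dTR
  | some i => dXR i

/-- the surface measure on the unit sphere `S² ⊆ ℝ³`. -/
def sphM : Measure (Metric.sphere (0 : Pt) 1) := (volume : Measure Pt).toSphere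

/-- weighted `L²` norm `(∫ |g(t,x)|² w(r−t) dx)^{1/2}`. -/
def sqL2 (w : ℝ → ℝ) (g : ℝ → Pt → ℂ) (t : ℝ) : ℝ :=
  Real.sqrt (∫ x : Pt, ‖g t x‖ ^ 2 * w (rad x - t))


/-- the Hardy density `⟨t+r⟩²|L(rφ)/r|² + ⟨t−r⟩²|L̲(rφ)/r|²` -/
def hDens (φ : ℝ → Pt → ℂ) (t : ℝ) (x : Pt) : ℝ :=
  jb (t + rad x) ^ 2 * ‖dL (rmul φ) t x / ((rad x : ℝ) : ℂ)‖ ^ 2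
    + jb (t - rad x) ^ 2 * ‖dLbar (rmul φ) t x / ((rad x : ℝ) : ℂ)‖ ^ 2

/-!
Since `L − L̲ = 2∂_r`, the density `hDens` controls `2 (r − |t|)² |∂_r(rφ)/r|²`, so only the radial
derivative matters. In polar coordinates the estimate becomes a one-dimensional Hardy inequality
for `ψ(r) = r φ(rω)` with weight `u(r) = w(r − t)` and centre `c = |t|`. For it, integrate
`((r − c)|ψ|²)' = |ψ|² + 2(r − c)⟪ψ, ψ'⟫` against `u`: the term containing `u'` has a favourable
sign because `(r − c) u' ≥ 0`, and completing the square in `|ψ + 2(r − c)ψ'|² ≥ 0` absorbs the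
cross term. The decay of `φ` kills the boundary term at infinity. The radial inequality holds in
every dimension `n ≥ 3`, with `r^{(n−1)/2}` in place of `r`.
-/

section LocallyLipschitz

lemma absolutelyContinuousOnInterval_of_locallyLipschitz {X : Type*} [PseudoMetricSpace X]
    {f : ℝ → X} (hf : LocallyLipschitz f) (a b : ℝ) : AbsolutelyContinuousOnInterval f a b := by
  obtain ⟨K, hK⟩ := (hf.locallyLipschitzOn (s := Set.uIcc a b)).exists_lipschitzOnWith_of_compact
    isCompact_uIcc
  exact hK.absolutelyContinuousOnInterval

lemma eq_left_of_locallyLipschitz_of_deriv_eq_zero {w : ℝ → ℝ} (hw : LocallyLipschitz w) {a : ℝ}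
    (hderiv : ∀ q, a < q → deriv w q = 0) {q : ℝ} (hq : a ≤ q) : w q = w a := by
  have hzero : ∫ s in a..q, deriv w s = 0 := by
    refine intervalIntegral.integral_zero_ae (ae_of_all _ fun s hs => hderiv s ?_)
    rw [Set.uIoc_of_le hq] at hs
    exact hs.1
  rw [(absolutelyContinuousOnInterval_of_locallyLipschitz hw a q).integral_deriv_eq_sub] at hzero
  exact sub_eq_zero.1 hzero

end LocallyLipschitz

section Integral

lemma integral_deriv_mul_le_of_mul_deriv_nonneg {f u : ℝ → ℝ} {a b : ℝ} (hab : a ≤ b)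
    (hf : AbsolutelyContinuousOnInterval f a b) (hu : AbsolutelyContinuousOnInterval u a b)
    (hfu : ∀ r ∈ Set.Ioo a b, 0 ≤ f r * deriv u r) :
    ∫ r in a..b, deriv f r * u r ≤ f b * u b - f a * u a := by
  have hnonneg : 0 ≤ ∫ r in a..b, f r * deriv u r := by
    rw [intervalIntegral.integral_of_le hab, integral_Ioc_eq_integral_Ioo]
    exact setIntegral_nonneg measurableSet_Ioo hfu
  linarith [hf.integral_mul_deriv_eq_deriv_mul hu]

lemma ofReal_intervalIntegral_eq_setLIntegral {f : ℝ → ℝ} {a b : ℝ} (hab : a ≤ b)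
    (hf : IntervalIntegrable f volume a b) (hf₀ : ∀ r ∈ Set.Ioc a b, 0 ≤ f r) :
    ENNReal.ofReal (∫ r in a..b, f r) = ∫⁻ r in Set.Ioc a b, ENNReal.ofReal (f r) := by
  rw [intervalIntegral.integral_of_le hab]
  exact ofReal_integral_eq_lintegral_ofReal hf.1 (ae_restrict_of_forall_mem measurableSet_Ioc hf₀)

lemma integral_le_integral_of_lintegral_ofReal_le {α : Type*} [MeasurableSpace α] {μ : Measure α}
    {f g : α → ℝ} (hf : AEStronglyMeasurable f μ) (hf₀ : 0 ≤ᵐ[μ] f) (hg : Integrable g μ)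
    (hg₀ : 0 ≤ᵐ[μ] g)
    (hfg : ∫⁻ x, ENNReal.ofReal (f x) ∂μ ≤ ∫⁻ x, ENNReal.ofReal (g x) ∂μ) :
    ∫ x, f x ∂μ ≤ ∫ x, g x ∂μ := by
  rw [integral_eq_lintegral_of_nonneg_ae hf₀ hf]
  refine ENNReal.toReal_le_of_le_ofReal (integral_nonneg_of_ae hg₀) ?_
  rwa [ofReal_integral_eq_lintegral_ofReal hg hg₀]

lemma lintegral_eq_lintegral_toSphere {E : Type*} [NormedAddCommGroup E] [NormedSpace ℝ E]
    [FiniteDimensional ℝ E] [Nontrivial E] [MeasurableSpace E] [BorelSpace E] (μ : Measure E)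
    [μ.IsAddHaarMeasure] {f : E → ENNReal} (hf : Measurable f) :
    ∫⁻ x, f x ∂μ = ∫⁻ ω : Metric.sphere (0 : E) 1, (∫⁻ r in Set.Ioi (0 : ℝ),
      ENNReal.ofReal (r ^ (Module.finrank ℝ E - 1)) * f (r • (ω : E))) ∂μ.toSphere := by
  set polar : Metric.sphere (0 : E) 1 × Set.Ioi (0 : ℝ) → E := fun p => p.2.1 • p.1.1
  have hpolar : Measurable (f ∘ polar) := hf.comp (by fun_prop)
  have hinv (x : ({0}ᶜ : Set E)) : polar (homeomorphUnitSphereProd E x) = x := by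
    simp [polar, smul_smul, norm_ne_zero_iff.2 x.2]
  calc
    ∫⁻ x, f x ∂μ = ∫⁻ x : ({0}ᶜ : Set E), f x ∂(μ.comap (↑)) := by
      rw [lintegral_subtype_comap (measurableSet_singleton _).compl,
        restrict_compl_singleton]
    _ = ∫⁻ p, f (polar p) ∂(μ.toSphere.prod (.volumeIoiPow (Module.finrank ℝ E - 1))) := by
      simpa only [Function.comp_apply, hinv] using
        μ.measurePreserving_homeomorphUnitSphereProd.lintegral_comp hpolar
    _ = _ := by
      refine (lintegral_prod _ hpolar.aemeasurable).trans (lintegral_congr fun ω => ?_)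
      refine (lintegral_withDensity_eq_lintegral_mul _ (by fun_prop)
        (hpolar.comp measurable_prodMk_left)).trans ?_
      exact lintegral_subtype_comap measurableSet_Ioi
        (fun r => ENNReal.ofReal (r ^ (Module.finrank ℝ E - 1)) * f (r • (ω : E)))

end Integral

section HardyOnRay

variable {F : Type*} [NormedAddCommGroup F] [InnerProductSpace ℝ F] {ψ : ℝ → F} {u : ℝ → ℝ}
  {a c : ℝ}

lemma hasDerivAt_sub_mul_norm_sq {ψ' : F} {r : ℝ} (hψ : HasDerivAt ψ ψ' r) (c : ℝ) :
    HasDerivAt (fun s => (s - c) * ‖ψ s‖ ^ 2) (‖ψ r‖ ^ 2 + 2 * (r - c) * ⟪ψ r, ψ'⟫) r := by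
  refine (((hasDerivAt_id r).sub_const c).mul hψ.norm_sq).congr_deriv ?_
  simp only [id_eq]
  ring

lemma norm_sq_le_two_mul_add_norm_sq (v v' : F) (s : ℝ) :
    ‖v‖ ^ 2 ≤ 2 * (‖v‖ ^ 2 + 2 * s * ⟪v, v'⟫) + 4 * s ^ 2 * ‖v'‖ ^ 2 := by
  have hsquare : ‖v + (2 * s) • v'‖ ^ 2 =
      ‖v‖ ^ 2 + 4 * s * ⟪v, v'⟫ + 4 * s ^ 2 * ‖v'‖ ^ 2 := by
    rw [norm_add_sq_real, real_inner_smul_right, norm_smul, mul_pow, Real.norm_eq_abs, sq_abs]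
    ring
  linarith [sq_nonneg ‖v + (2 * s) • v'‖]

theorem intervalIntegral_norm_sq_mul_le_of_contDiff {b : ℝ} (hab : a ≤ b) (hψ : ContDiff ℝ 1 ψ)
    (hu : AbsolutelyContinuousOnInterval u a b) (hu₀ : ∀ r ∈ Set.Icc a b, 0 ≤ u r)
    (hu' : ∀ r ∈ Set.Ioo a b, 0 ≤ (r - c) * deriv u r) :
    ∫ r in a..b, ‖ψ r‖ ^ 2 * u r ≤
      2 * ((b - c) * ‖ψ b‖ ^ 2 * u b - (a - c) * ‖ψ a‖ ^ 2 * u a) +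
        ∫ r in a..b, 4 * (r - c) ^ 2 * ‖deriv ψ r‖ ^ 2 * u r := by
  set f : ℝ → ℝ := fun r => (r - c) * ‖ψ r‖ ^ 2
  have hf : ContDiff ℝ 1 f := (contDiff_id.sub contDiff_const).mul (hψ.norm_sq ℝ)
  have hf' : Continuous (deriv f) := hf.continuous_deriv le_rfl
  have hderiv (r : ℝ) : deriv f r = ‖ψ r‖ ^ 2 + 2 * (r - c) * ⟪ψ r, deriv ψ r⟫ :=
    (hasDerivAt_sub_mul_norm_sq (hψ.differentiable one_ne_zero r).hasDerivAt c).deriv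
  have hint {g : ℝ → ℝ} (hg : Continuous g) :
      IntervalIntegrable (fun r => g r * u r) volume a b :=
    (hg.continuousOn.mul hu.continuousOn).intervalIntegrable
  have hint_deriv : IntervalIntegrable
      (fun r => 4 * (r - c) ^ 2 * ‖deriv ψ r‖ ^ 2 * u r) volume a b :=
    hint (.mul (by fun_prop) ((hψ.continuous_deriv le_rfl).norm.pow 2))
  have hparts : ∫ r in a..b, deriv f r * u r ≤ f b * u b - f a * u a := by
    refine integral_deriv_mul_le_of_mul_deriv_nonneg hab
      hf.contDiffOn.absolutelyContinuousOnInterval hu fun r hr => ?_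
    rw [mul_right_comm]
    exact mul_nonneg (hu' r hr) (sq_nonneg _)
  calc
    ∫ r in a..b, ‖ψ r‖ ^ 2 * u r
      ≤ ∫ r in a..b, (2 * (deriv f r * u r) + 4 * (r - c) ^ 2 * ‖deriv ψ r‖ ^ 2 * u r) := by
        refine intervalIntegral.integral_mono_on hab (hint (hψ.continuous.norm.pow 2))
          (((hint hf').const_mul 2).add hint_deriv) fun r hr => ?_
        rw [← mul_assoc, ← add_mul, hderiv]
        exact mul_le_mul_of_nonneg_right (norm_sq_le_two_mul_add_norm_sq _ _ _) (hu₀ r hr)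
    _ = 2 * (∫ r in a..b, deriv f r * u r) +
          ∫ r in a..b, 4 * (r - c) ^ 2 * ‖deriv ψ r‖ ^ 2 * u r := by
        rw [intervalIntegral.integral_add ((hint hf').const_mul 2) hint_deriv,
          intervalIntegral.integral_const_mul]
    _ ≤ _ := by gcongr

theorem setLIntegral_Ioi_norm_sq_mul_le_of_contDiff (hψ : ContDiff ℝ 1 ψ) (hψa : ψ a = 0)
    (hu : LocallyLipschitz u) (hu₀ : ∀ r, a ≤ r → 0 ≤ u r)
    (hu' : ∀ r, a < r → 0 ≤ (r - c) * deriv u r)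
    (hlim : Tendsto (fun r => (r - c) * ‖ψ r‖ ^ 2 * u r) atTop (𝓝 0)) :
    ∫⁻ r in Set.Ioi a, ENNReal.ofReal (‖ψ r‖ ^ 2 * u r) ≤
      ∫⁻ r in Set.Ioi a, ENNReal.ofReal (4 * (r - c) ^ 2 * ‖deriv ψ r‖ ^ 2 * u r) := by
  set f : ℝ → ℝ := fun r => ‖ψ r‖ ^ 2 * u r
  set g : ℝ → ℝ := fun r => 4 * (r - c) ^ 2 * ‖deriv ψ r‖ ^ 2 * u r
  have hu_cont : Continuous u := hu.continuous
  have hf : Continuous f := (hψ.continuous.norm.pow 2).mul hu_cont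
  have hg : Continuous g :=
    .mul (.mul (by fun_prop) ((hψ.continuous_deriv le_rfl).norm.pow 2)) hu_cont
  have hf₀ (r : ℝ) (hr : a ≤ r) : 0 ≤ f r := mul_nonneg (sq_nonneg _) (hu₀ r hr)
  have hg₀ (r : ℝ) (hr : a ≤ r) : 0 ≤ g r := mul_nonneg (by positivity) (hu₀ r hr)
  have hleft : Tendsto (fun b => ∫⁻ r in Set.Ioc a b, ENNReal.ofReal (f r)) atTop
      (𝓝 (∫⁻ r in Set.Ioi a, ENNReal.ofReal (f r))) := by
    have hcover : AECover (volume.restrict (Set.Ioi a)) atTop Set.Iic := aecover_Iic tendsto_id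
    simpa only [Measure.restrict_restrict measurableSet_Iic, Set.Iic_inter_Ioi] using
      hcover.lintegral_tendsto_of_countably_generated hf.measurable.ennreal_ofReal.aemeasurable
  have hright : Tendsto (fun b => ENNReal.ofReal (2 * ((b - c) * ‖ψ b‖ ^ 2 * u b)) +
      ∫⁻ r in Set.Ioi a, ENNReal.ofReal (g r)) atTop
      (𝓝 (∫⁻ r in Set.Ioi a, ENNReal.ofReal (g r))) := by
    simpa using (ENNReal.tendsto_ofReal (hlim.const_mul 2)).add_const
      (∫⁻ r in Set.Ioi a, ENNReal.ofReal (g r))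
  refine le_of_tendsto_of_tendsto hleft hright ?_
  filter_upwards [eventually_ge_atTop a] with b hab
  have hinterval := intervalIntegral_norm_sq_mul_le_of_contDiff hab hψ
    (absolutelyContinuousOnInterval_of_locallyLipschitz hu a b) (fun r hr => hu₀ r hr.1)
    (fun r hr => hu' r hr.1)
  calc
    ∫⁻ r in Set.Ioc a b, ENNReal.ofReal (f r) = ENNReal.ofReal (∫ r in a..b, f r) :=
      (ofReal_intervalIntegral_eq_setLIntegral hab (hf.intervalIntegrable a b)
        fun r hr => hf₀ r hr.1.le).symm
    _ ≤ ENNReal.ofReal (2 * ((b - c) * ‖ψ b‖ ^ 2 * u b) + ∫ r in a..b, g r) :=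
      ENNReal.ofReal_le_ofReal (by simpa [hψa] using hinterval)
    _ ≤ ENNReal.ofReal (2 * ((b - c) * ‖ψ b‖ ^ 2 * u b)) + ENNReal.ofReal (∫ r in a..b, g r) :=
      ENNReal.ofReal_add_le
    _ ≤ _ := by
      rw [ofReal_intervalIntegral_eq_setLIntegral hab (hg.intervalIntegrable a b)
        fun r hr => hg₀ r hr.1.le]
      gcongr
      exact Set.Ioc_subset_Ioi_self

end HardyOnRay

section RadialHardy

lemma tendsto_norm_pow_mul_norm_sq_mul {E F : Type*} [NormedAddCommGroup E] [ProperSpace E]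
    [NormedAddCommGroup F] {φ : E → F} {u : ℝ → ℝ} {l : ℝ} (n : ℕ)
    (hφ : Tendsto (fun x => ‖x‖ ^ ((n : ℝ) / 2) * ‖φ x‖) (cocompact E) (𝓝 0))
    (hu : Tendsto u atTop (𝓝 l)) :
    Tendsto (fun x => ‖x‖ ^ n * ‖φ x‖ ^ 2 * u ‖x‖) (cocompact E) (𝓝 0) := by
  have hpow (x : E) : (‖x‖ ^ ((n : ℝ) / 2)) ^ 2 = ‖x‖ ^ n := by
    rw [← Real.rpow_mul_natCast (norm_nonneg x), Nat.cast_ofNat, div_mul_cancel₀ _ two_ne_zero,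
      Real.rpow_natCast]
  simpa [mul_pow, hpow] using (hφ.pow 2).mul (hu.comp tendsto_norm_cocompact_atTop)

variable {E F : Type*} [NormedAddCommGroup E] [NormedSpace ℝ E] [NormedAddCommGroup F]

/-- The shifted Euler operator `p + r∂_r = r^{1−p} ∂_r (r^p ·)`, the radial derivative of `r^p φ`
up to a power of `r`; `r∂_r` is encoded as the derivative in the direction of the position vector,
so that nothing singular happens at the origin. -/
def shiftedEuler [NormedSpace ℝ F] (p : ℝ) (φ : E → F) (x : E) : F := p • φ x + fderiv ℝ φ x x

lemma continuous_shiftedEuler [NormedSpace ℝ F] {φ : E → F} (hφ : ContDiff ℝ 1 φ) (p : ℝ) :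
    Continuous (shiftedEuler p φ) :=
  (hφ.continuous.const_smul p).add ((hφ.continuous_fderiv one_ne_zero).clm_apply continuous_id)

lemma hasDerivAt_rpow_smul_comp_smul [NormedSpace ℝ F] {φ : E → F} {ω : E} {r : ℝ} (hr : 0 < r)
    (hφ : DifferentiableAt ℝ φ (r • ω)) (p : ℝ) :
    HasDerivAt (fun s : ℝ => s ^ p • φ (s • ω)) (r ^ (p - 1) • shiftedEuler p φ (r • ω)) r := by
  have hray : HasDerivAt (fun s : ℝ => φ (s • ω)) (fderiv ℝ φ (r • ω) ω) r := by
    refine hφ.hasFDerivAt.comp_hasDerivAt r ?_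
    simpa using (hasDerivAt_id r).smul_const ω
  refine ((Real.hasDerivAt_rpow_const (p := p) (Or.inl hr.ne')).smul hray).congr_deriv ?_
  have hpow : r ^ p = r ^ (p - 1) * r := by rw [← Real.rpow_add_one hr.ne', sub_add_cancel]
  rw [shiftedEuler, map_smul, hpow]
  module

lemma tendsto_sub_mul_of_tendsto_mul {h : ℝ → ℝ} (hlim : Tendsto (fun r => r * h r) atTop (𝓝 0))
    (c : ℝ) : Tendsto (fun r => (r - c) * h r) atTop (𝓝 0) := by
  have hratio : Tendsto (fun r : ℝ => 1 - c / r) atTop (𝓝 1) := by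
    simpa using (tendsto_const_nhds (x := (1 : ℝ))).sub (tendsto_const_nhds.div_atTop tendsto_id)
  refine Tendsto.congr' ?_ (by simpa using hratio.mul hlim)
  filter_upwards [eventually_ne_atTop 0] with r hr
  field_simp

lemma tendsto_smul_atTop_cocompact {ω : E} (hω : ω ≠ 0) [ProperSpace E] :
    Tendsto (fun r : ℝ => r • ω) atTop (cocompact E) := by
  refine tendsto_cocompact_of_tendsto_dist_comp_atTop 0 ?_
  simp only [dist_zero_right, norm_smul]
  exact tendsto_norm_atTop_atTop.atTop_mul_const (norm_pos_iff.2 hω)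

variable [InnerProductSpace ℝ F] {φ : E → F} {u : ℝ → ℝ} {c : ℝ}

lemma setLIntegral_ray_norm_sq_mul_le {n : ℕ} (hn : 3 ≤ n) (hφ : ContDiff ℝ 1 φ)
    (hu : LocallyLipschitz u) (hu₀ : ∀ r, 0 ≤ r → 0 ≤ u r)
    (hu' : ∀ r, 0 < r → 0 ≤ (r - c) * deriv u r) {ω : E}
    (hlim : Tendsto (fun r : ℝ => r ^ n * ‖φ (r • ω)‖ ^ 2 * u r) atTop (𝓝 0)) :
    ∫⁻ r in Set.Ioi (0 : ℝ), ENNReal.ofReal (r ^ (n - 1) * (‖φ (r • ω)‖ ^ 2 * u r)) ≤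
      ∫⁻ r in Set.Ioi (0 : ℝ), ENNReal.ofReal (r ^ (n - 1) *
        (4 * (r - c) ^ 2 * (‖shiftedEuler ((n - 1) / 2) φ (r • ω)‖ / r) ^ 2 * u r)) := by
  set p : ℝ := (n - 1) / 2 with hp
  have hp_one : 1 ≤ p := by
    have : (3 : ℝ) ≤ n := mod_cast hn
    linarith
  have hpow {r : ℝ} (hr : 0 < r) : (r ^ p) ^ 2 = r ^ (n - 1) := by
    rw [← Real.rpow_mul_natCast hr.le, ← Real.rpow_natCast r (n - 1), Nat.cast_sub (by omega), hp]
    push_cast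
    ring_nf
  set ψ : ℝ → F := fun r => r ^ p • φ (r • ω)
  have hψ : ContDiff ℝ 1 ψ :=
    (Real.contDiff_rpow_const_of_le (n := 1) (mod_cast hp_one)).smul
      (hφ.comp (contDiff_id.smul contDiff_const))
  have hψ_norm {r : ℝ} (hr : 0 < r) : ‖ψ r‖ ^ 2 = r ^ (n - 1) * ‖φ (r • ω)‖ ^ 2 := by
    rw [norm_smul, mul_pow, Real.norm_eq_abs, sq_abs, hpow hr]
  have hψ_deriv {r : ℝ} (hr : 0 < r) :
      ‖deriv ψ r‖ ^ 2 = r ^ (n - 1) * (‖shiftedEuler p φ (r • ω)‖ / r) ^ 2 := by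
    rw [(hasDerivAt_rpow_smul_comp_smul hr (hφ.differentiable one_ne_zero _) p).deriv, norm_smul,
      mul_pow, Real.norm_eq_abs, sq_abs, Real.rpow_sub_one hr.ne', div_pow, hpow hr]
    ring
  have hψ_lim : Tendsto (fun r => (r - c) * ‖ψ r‖ ^ 2 * u r) atTop (𝓝 0) := by
    simp only [mul_assoc]
    refine tendsto_sub_mul_of_tendsto_mul (hlim.congr' ?_) c
    filter_upwards [eventually_gt_atTop 0] with r hr
    rw [hψ_norm hr, ← mul_pow_sub_one (by omega : n ≠ 0)]
    ring
  have hhardy := setLIntegral_Ioi_norm_sq_mul_le_of_contDiff hψ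
    (by simp [ψ, Real.zero_rpow (by linarith : p ≠ 0)]) hu hu₀ hu' hψ_lim
  convert hhardy using 1 <;> refine setLIntegral_congr_fun measurableSet_Ioi fun r hr => ?_
  · simp only [hψ_norm hr]
    ring_nf
  · simp only [hψ_deriv hr]
    ring_nf

theorem lintegral_norm_sq_mul_radial_le [FiniteDimensional ℝ E] [MeasurableSpace E] [BorelSpace E]
    (μ : Measure E) [μ.IsAddHaarMeasure] (hE : 3 ≤ Module.finrank ℝ E) (hφ : ContDiff ℝ 1 φ)
    (hu : LocallyLipschitz u) (hu₀ : ∀ r, 0 ≤ r → 0 ≤ u r)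
    (hu' : ∀ r, 0 < r → 0 ≤ (r - c) * deriv u r)
    (hlim : Tendsto (fun x => ‖x‖ ^ Module.finrank ℝ E * ‖φ x‖ ^ 2 * u ‖x‖) (cocompact E) (𝓝 0)) :
    ∫⁻ x, ENNReal.ofReal (‖φ x‖ ^ 2 * u ‖x‖) ∂μ ≤
      ∫⁻ x, ENNReal.ofReal (4 * (‖x‖ - c) ^ 2 *
        (‖shiftedEuler ((Module.finrank ℝ E - 1) / 2) φ x‖ / ‖x‖) ^ 2 * u ‖x‖) ∂μ := by
  have : Nontrivial E := Module.nontrivial_of_finrank_pos (R := ℝ) (by omega)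
  have : ProperSpace E := FiniteDimensional.proper_real E
  have hu_meas : Measurable fun x : E => u ‖x‖ := (hu.continuous.comp continuous_norm).measurable
  have hφ_meas : Measurable fun x => ‖φ x‖ ^ 2 := (hφ.continuous.norm.pow 2).measurable
  have hEuler_meas : Measurable fun x => 4 * (‖x‖ - c) ^ 2 *
      (‖shiftedEuler ((Module.finrank ℝ E - 1) / 2) φ x‖ / ‖x‖) ^ 2 :=
    .mul (by fun_prop)
      (((continuous_shiftedEuler hφ _).norm.measurable.div measurable_norm).pow_const 2)
  rw [lintegral_eq_lintegral_toSphere μ (by exact (hφ_meas.mul hu_meas).ennreal_ofReal),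
    lintegral_eq_lintegral_toSphere μ (by exact (hEuler_meas.mul hu_meas).ennreal_ofReal)]
  refine lintegral_mono fun ω => ?_
  have hω : ‖(ω : E)‖ = 1 := by simp
  have hnorm {r : ℝ} (hr : 0 < r) : ‖r • (ω : E)‖ = r := by
    rw [norm_smul, hω, mul_one, Real.norm_of_nonneg hr.le]
  have hray_lim :
      Tendsto (fun r : ℝ => r ^ Module.finrank ℝ E * ‖φ (r • (ω : E))‖ ^ 2 * u r) atTop (𝓝 0) := by
    refine (hlim.comp (tendsto_smul_atTop_cocompact (ne_zero_of_mem_unit_sphere ω))).congr' ?_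
    filter_upwards [eventually_gt_atTop 0] with r hr
    rw [Function.comp_apply, hnorm hr]
  convert setLIntegral_ray_norm_sq_mul_le hE hφ hu hu₀ hu' hray_lim using 1 <;>
  · refine setLIntegral_congr_fun measurableSet_Ioi fun r hr => ?_
    rw [ENNReal.ofReal_mul (pow_nonneg (le_of_lt hr) _)]
    simp only [hnorm hr]

end RadialHardy

section NullFrame

lemma dR_eq_fderiv_self (f : ℝ → Pt → ℂ) (t : ℝ) (x : Pt) :
    dR f t x = ((rad x : ℝ) : ℂ)⁻¹ * fderiv ℝ (f t) x x := by
  have hbasis : ∑ i, x i • EuclideanSpace.single i (1 : ℝ) = x := by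
    simpa using (EuclideanSpace.basisFun (Fin 3) ℝ).sum_repr x
  have hexpand := congrArg (fderiv ℝ (f t) x) hbasis
  simp only [map_sum, map_smul, Complex.real_smul] at hexpand
  rw [← hexpand]
  rfl

lemma dR_rmul {φ : ℝ → Pt → ℂ} {t : ℝ} {x : Pt} (hx : x ≠ 0)
    (hφ : DifferentiableAt ℝ (φ t) x) : dR (rmul φ) t x = shiftedEuler 1 (φ t) x := by
  have hnorm : DifferentiableAt ℝ (fun y : Pt => ‖y‖) x := differentiableAt_id.norm ℝ hx
  have hrmul : rmul φ t = (fun y : Pt => ‖y‖) • φ t := by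
    ext y
    simp [rmul, rad]
  have hr : ((‖x‖ : ℝ) : ℂ) ≠ 0 := mod_cast norm_ne_zero_iff.2 hx
  have hfderiv : fderiv ℝ (rmul φ t) x x = ‖x‖ • shiftedEuler 1 (φ t) x := by
    rw [hrmul, (hnorm.hasFDerivAt.smul hφ.hasFDerivAt).fderiv, shiftedEuler]
    simp [hnorm.fderiv_norm_self, add_comm]
  rw [dR_eq_fderiv_self, hfderiv, rad, Complex.real_smul, inv_mul_cancel_left₀ hr]

lemma dL_sub_dLbar (f : ℝ → Pt → ℂ) (t : ℝ) (x : Pt) : dL f t x - dLbar f t x = 2 * dR f t x := by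
  simp only [dL, dLbar]
  ring

lemma sq_abs_sub_abs_le_jb_sub_sq (a b : ℝ) : (|a| - |b|) ^ 2 ≤ jb (b - a) ^ 2 := by
  have hjb : jb (b - a) ^ 2 = 1 + (b - a) ^ 2 := Real.sq_sqrt (by positivity)
  linarith [sq_le_sq.2 (abs_abs_sub_abs_le a b), sub_sq_comm a b]

lemma hDens_nonneg (φ : ℝ → Pt → ℂ) (t : ℝ) (x : Pt) : 0 ≤ hDens φ t x := by
  unfold hDens
  positivity

lemma four_mul_sq_mul_dR_rmul_le_hDens (φ : ℝ → Pt → ℂ) (t : ℝ) (x : Pt) :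
    4 * (‖x‖ - |t|) ^ 2 * (‖dR (rmul φ) t x‖ / ‖x‖) ^ 2 ≤ 2 * hDens φ t x := by
  set A := dL (rmul φ) t x / ((rad x : ℝ) : ℂ) with hA
  set B := dLbar (rmul φ) t x / ((rad x : ℝ) : ℂ) with hB
  have hdR : 4 * (‖dR (rmul φ) t x‖ / ‖x‖) ^ 2 = ‖A - B‖ ^ 2 := by
    rw [hA, hB, ← sub_div, dL_sub_dLbar, norm_div, norm_mul, Complex.norm_real, rad, norm_norm,
      Complex.norm_two]
    ring
  have hplus : (‖x‖ - |t|) ^ 2 ≤ jb (t + rad x) ^ 2 := by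
    simpa [rad] using sq_abs_sub_abs_le_jb_sub_sq (-‖x‖) t
  have hminus : (‖x‖ - |t|) ^ 2 ≤ jb (t - rad x) ^ 2 := by
    simpa [rad] using sq_abs_sub_abs_le_jb_sub_sq ‖x‖ t
  calc
    4 * (‖x‖ - |t|) ^ 2 * (‖dR (rmul φ) t x‖ / ‖x‖) ^ 2
      = (‖x‖ - |t|) ^ 2 * ‖A - B‖ ^ 2 := by rw [← hdR]; ring
    _ ≤ (‖x‖ - |t|) ^ 2 * (2 * (‖A‖ ^ 2 + ‖B‖ ^ 2)) := by
      gcongr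
      exact (pow_le_pow_left₀ (norm_nonneg _) (norm_sub_le A B) 2).trans add_sq_le
    _ = 2 * ((‖x‖ - |t|) ^ 2 * ‖A‖ ^ 2 + (‖x‖ - |t|) ^ 2 * ‖B‖ ^ 2) := by ring
    _ ≤ 2 * hDens φ t x := by
      unfold hDens
      gcongr

lemma four_mul_sq_mul_shiftedEuler_le_hDens {φ : ℝ → Pt → ℂ} {t : ℝ}
    (hφ : Differentiable ℝ (φ t)) (x : Pt) :
    4 * (‖x‖ - |t|) ^ 2 * (‖shiftedEuler 1 (φ t) x‖ / ‖x‖) ^ 2 ≤ 2 * hDens φ t x := by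
  rcases eq_or_ne x 0 with rfl | hx
  · simpa using hDens_nonneg φ t 0
  · rw [← dR_rmul hx (hφ x)]
    exact four_mul_sq_mul_dR_rmul_le_hDens φ t x

end NullFrame

section Weight

variable {w : ℝ → ℝ}

lemma tendsto_sub_const_of_deriv_eq_zero (hw : LocallyLipschitz w)
    (hw_pos : ∀ q, 0 < q → deriv w q = 0) (t : ℝ) :
    Tendsto (fun r => w (r - t)) atTop (𝓝 (w 0)) := by
  refine tendsto_const_nhds.congr' ?_
  filter_upwards [eventually_ge_atTop t] with r hr
  exact (eq_left_of_locallyLipschitz_of_deriv_eq_zero hw hw_pos (sub_nonneg.2 hr)).symm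

lemma sub_abs_mul_deriv_comp_sub_nonneg (hw_neg : ∀ q, q ≤ 0 → deriv w q ≤ 0)
    (hw_pos : ∀ q, 0 < q → deriv w q = 0) (t r : ℝ) :
    0 ≤ (r - |t|) * deriv (fun s => w (s - t)) r := by
  rw [deriv_comp_sub_const]
  rcases lt_or_ge 0 (r - t) with houtside | hinside
  · rw [hw_pos _ houtside, mul_zero]
  · exact mul_nonneg_of_nonpos_of_nonpos (by linarith [le_abs_self t]) (hw_neg _ hinside)

theorem lintegral_norm_sq_mul_le_lintegral_hDens {φ : ℝ → Pt → ℂ} {t : ℝ}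
    (hw : LocallyLipschitz w) (hw₀ : ∀ q, 0 ≤ w q) (hw_neg : ∀ q, q ≤ 0 → deriv w q ≤ 0)
    (hw_pos : ∀ q, 0 < q → deriv w q = 0) (hφ : ContDiff ℝ 1 (φ t))
    (hdecay : Tendsto (fun x => rad x ^ ((3 : ℝ) / 2) * ‖φ t x‖) (cocompact Pt) (𝓝 0)) :
    ∫⁻ x, ENNReal.ofReal (‖φ t x‖ ^ 2 * w (rad x - t)) ≤
      ∫⁻ x, ENNReal.ofReal (2 * (hDens φ t x * w (rad x - t))) := by
  have hdim : Module.finrank ℝ Pt = 3 := finrank_euclideanSpace_fin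
  have hshift : LocallyLipschitz fun r => w (r - t) :=
    hw.comp (LipschitzWith.id.sub (LipschitzWith.const t)).locallyLipschitz
  have hlim := tendsto_norm_pow_mul_norm_sq_mul 3 (by simpa [rad] using hdecay)
    (tendsto_sub_const_of_deriv_eq_zero hw hw_pos t)
  have hhardy := lintegral_norm_sq_mul_radial_le volume hdim.ge hφ hshift (fun r _ => hw₀ _)
    (fun r _ => sub_abs_mul_deriv_comp_sub_nonneg hw_neg hw_pos t r) (by rwa [hdim])
  refine hhardy.trans (lintegral_mono fun x => ENNReal.ofReal_le_ofReal ?_)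
  have hshift_eq : ((Module.finrank ℝ Pt : ℝ) - 1) / 2 = 1 := by norm_num [hdim]
  rw [hshift_eq, ← mul_assoc]
  exact mul_le_mul_of_nonneg_right
    (four_mul_sq_mul_shiftedEuler_le_hDens (hφ.differentiable one_ne_zero) x) (hw₀ _)

end Weight

theorem stmt4_general {w : ℝ → ℝ} {φ : ℝ → Pt → ℂ} (hw : LocallyLipschitz w)
    (hw₀ : ∀ q, 0 ≤ w q) (hw_neg : ∀ q, q ≤ 0 → deriv w q ≤ 0)
    (hw_pos : ∀ q, 0 < q → deriv w q = 0) (hφ : ContDiff ℝ 1 (Function.uncurry φ)) {t : ℝ}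
    (hdecay : Tendsto (fun x => rad x ^ ((3 : ℝ) / 2) * ‖φ t x‖) (cocompact Pt) (𝓝 0))
    (hint : Integrable fun x => hDens φ t x * w (rad x - t)) :
    ∫ x, ‖φ t x‖ ^ 2 * w (rad x - t) ≤ 2 * ∫ x, hDens φ t x * w (rad x - t) := by
  have hslice : ContDiff ℝ 1 (φ t) := hφ.comp (contDiff_prodMk_right t)
  have hcont : Continuous fun x => ‖φ t x‖ ^ 2 * w (rad x - t) :=
    (hslice.continuous.norm.pow 2).mul (hw.continuous.comp (continuous_norm.sub continuous_const))
  rw [← integral_const_mul]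
  refine integral_le_integral_of_lintegral_ofReal_le hcont.aestronglyMeasurable
    (ae_of_all _ fun x => mul_nonneg (sq_nonneg _) (hw₀ _)) (hint.const_mul 2)
    (ae_of_all _ fun x => mul_nonneg two_pos.le (mul_nonneg (hDens_nonneg φ t x) (hw₀ _))) ?_
  exact lintegral_norm_sq_mul_le_lintegral_hDens hw hw₀ hw_neg hw_pos hslice hdecay

/-- Lemma 2.5: weighted Hardy-type estimate
`∫ |φ|² w ≤ C ∫ (⟨t+r⟩²|L(rφ)/r|² + ⟨t−r⟩²|L̲(rφ)/r|²) w`. -/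
theorem stmt4 :
    ∃ C : ℝ, 0 < C ∧
      ∀ (w : ℝ → ℝ) (φ : ℝ → Pt → ℂ),
        LocallyLipschitz w → (∀ q : ℝ, 0 ≤ w q) →
        (∀ q : ℝ, q ≤ 0 → deriv w q ≤ 0) → (∀ q : ℝ, 0 < q → deriv w q = 0) →
        Smooth2 φ →
        (∀ t : ℝ, Tendsto (fun x : Pt => rad x ^ ((3 : ℝ) / 2) * ‖φ t x‖)
          (Filter.cocompact Pt) (𝓝 0)) →
        ∀ t : ℝ,
          Integrable (fun x : Pt => hDens φ t x * w (rad x - t)) →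
          (∫ x : Pt, ‖φ t x‖ ^ 2 * w (rad x - t))
            ≤ C * ∫ x : Pt, hDens φ t x * w (rad x - t) :=
  ⟨2, two_pos, fun _ _ hw hw₀ hw_neg hw_pos hφ hdecay t hint =>
    stmt4_general hw hw₀ hw_neg hw_pos (hφ.of_le (mod_cast le_top)) (hdecay t) hint⟩
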